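/- Assume s = 4, q = p, p ∤ (m/t), d | h, and a = 0. Then: if (d,l) = (1,1) then N_t = (p^{t−1} − 1)/4; if (d,l) = (1,2) then N_t = (1/4)·( p^{t−1} − 1 − (−1)^{i_0}·p^{(t−2)/2}·(p−1) ); if (d,l) = (1,4) then N_t = (1/4)·( p^{t−1} − 1 − (−1)^{i_0}·p^{(t−4)/4}·(p−1)·( p^{t/4} + 2·Re(π_4^{t/2}·i^{i_0}) ) ); if (d,l) = (2,1) then N_t = (p^{t−1} − 1)/2; if (d,l) = (2,2) then N_t = (1/2)·( p^{t−1} − 1 − (−1)^{i_0}·p^{(t−2)/2}·(p−1) ); if (d,l) = (4,1) then N_t = p^{t−1} − 1. -/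

import Mathlib

noncomputable section

open Complex Polynomial Classical

/-- `N_t(a,s,h)`: the number of elements `x` of the subfield `F_{q^t}` of `K = F_{q^m}`
with `Tr_{K/F}(x) = a` and `N_{K/F}(x) ∈ g^h·⟨g^s⟩`. -/
def NN (F K : Type*) [Field F] [Fintype F] [Field K] [Fintype K] [Algebra F K]
    (g : F) (s h t : ℕ) (a : F) : ℕ :=
  Nat.card {x : K // x ^ (Fintype.card F) ^ t = x ∧ Algebra.trace F K x = a ∧
    ∃ k : ℕ, Algebra.norm F x = g ^ (h + s * k)}

set_option linter.unusedSectionVars false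
set_option linter.unusedVariables false


section HD
variable {F : Type*} [Field F] [Fintype F]

theorem monFinite (n : ℕ) : {f : F[X] | f.Monic ∧ f.natDegree = n}.Finite := by
  apply Set.Finite.of_finite_image (f := fun f : F[X] => fun i : Fin (n+1) => f.coeff i)
  · exact Set.toFinite _
  · intro f hf g hg h
    ext i
    by_cases hi : i < n + 1
    · exact congrFun h ⟨i, hi⟩
    · rw [coeff_eq_zero_of_natDegree_lt (by have := hf.2; omega),
        coeff_eq_zero_of_natDegree_lt (by have := hg.2; omega)]

def Mon (F : Type*) [Field F] [Fintype F] (n : ℕ) : Finset F[X] := (monFinite (F := F) n).toFinset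

theorem mem_Mon {n : ℕ} {f : F[X]} : f ∈ Mon F n ↔ f.Monic ∧ f.natDegree = n := by
  simp [Mon]

def Irr (F : Type*) [Field F] [Fintype F] (n : ℕ) : Finset F[X] :=
  ((Finset.range (n+1)).biUnion (fun k => Mon F k)).filter Irreducible

theorem mem_Irr {n : ℕ} {f : F[X]} : f ∈ Irr F n ↔ f.Monic ∧ f.natDegree ≤ n ∧ Irreducible f := by
  simp only [Irr, mem_Mon, Finset.mem_filter, Finset.mem_biUnion, Finset.mem_range]
  constructor
  · rintro ⟨⟨k, hk, a, rfl⟩, b⟩; exact ⟨a, by omega, b⟩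
  · rintro ⟨a, b, c⟩; exact ⟨⟨_, by omega, a, rfl⟩, c⟩

theorem key_count {n : ℕ} {f : F[X]} (hf : f ∈ Mon F n) :
    ∑ P ∈ Irr F n, ∑ j ∈ Finset.Icc 1 n, (if P ^ j ∣ f then P.natDegree else 0) = n := by
  rw [mem_Mon] at hf
  obtain ⟨hm, hn⟩ := hf
  have h0 : f ≠ 0 := hm.ne_zero
  have hcnt : ∀ P ∈ Irr F n, ∑ j ∈ Finset.Icc 1 n, (if P ^ j ∣ f then P.natDegree else 0)
      = (UniqueFactorizationMonoid.normalizedFactors f).count P * P.natDegree := by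
    intro P hP
    rw [mem_Irr] at hP
    obtain ⟨hPm, hPn, hPi⟩ := hP
    have hiff : ∀ j, P ^ j ∣ f ↔ j ≤ (UniqueFactorizationMonoid.normalizedFactors f).count P := by
      intro j
      have := UniqueFactorizationMonoid.le_emultiplicity_iff_replicate_le_normalizedFactors
        (n := j) hPi h0
      rw [← pow_dvd_iff_le_emultiplicity, hPm.normalize_eq_self] at this
      rw [this, Multiset.le_count_iff_replicate_le]
    rw [← Finset.sum_filter, Finset.sum_const, smul_eq_mul]
    congr 1
    have : (Finset.Icc 1 n).filter (fun j => P ^ j ∣ f) =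
        Finset.Icc 1 ((UniqueFactorizationMonoid.normalizedFactors f).count P) := by
      ext j
      simp only [Finset.mem_filter, Finset.mem_Icc, hiff]
      constructor
      · rintro ⟨⟨h1, _⟩, h2⟩; exact ⟨h1, h2⟩
      · rintro ⟨h1, h2⟩
        refine ⟨⟨h1, ?_⟩, h2⟩
        have hd := natDegree_le_of_dvd ((hiff j).2 h2) h0
        rw [natDegree_pow] at hd
        have := hPi.natDegree_pos
        nlinarith
    rw [this]; simp
  rw [Finset.sum_congr rfl hcnt]
  have hprod : (UniqueFactorizationMonoid.normalizedFactors f).prod = f := by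
    rw [UniqueFactorizationMonoid.prod_normalizedFactors_eq h0, hm.normalize_eq_self]
  have hsub : (UniqueFactorizationMonoid.normalizedFactors f).toFinset ⊆ Irr F n := by
    intro P hP
    rw [Multiset.mem_toFinset] at hP
    rw [mem_Irr]
    have hPi := UniqueFactorizationMonoid.irreducible_of_normalized_factor P hP
    refine ⟨?_, ?_, hPi⟩
    · have := UniqueFactorizationMonoid.normalize_normalized_factor P hP
      rw [← this]; exact monic_normalize hPi.ne_zero
    · rw [← hn]; exact natDegree_le_of_dvd (UniqueFactorizationMonoid.dvd_of_mem_normalizedFactors hP) h0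
  rw [← Finset.sum_subset hsub]
  · have h1 := Polynomial.natDegree_multiset_prod (UniqueFactorizationMonoid.normalizedFactors f)
      (UniqueFactorizationMonoid.zero_notMem_normalizedFactors f)
    rw [hprod, hn, Finset.sum_multiset_map_count] at h1
    rw [h1]; simp
  · intro P _ hP
    rw [Multiset.mem_toFinset] at hP
    rw [Multiset.count_eq_zero_of_notMem hP, zero_mul]

/-- A multiplicative function on monic polynomials. -/
structure IsMulFn (lam : F[X] → ℂ) : Prop where
  one : lam 1 = 1
  mul : ∀ f g : F[X], f.Monic → g.Monic → lam (f * g) = lam f * lam g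

theorem IsMulFn.pow {lam : F[X] → ℂ} (h : IsMulFn lam) {f : F[X]} (hf : f.Monic) (n : ℕ) :
    lam (f ^ n) = lam f ^ n := by
  induction n with
  | zero => simp [h.one]
  | succ k ih => rw [pow_succ, h.mul _ _ (hf.pow k) hf, ih, pow_succ]

def MS (lam : F[X] → ℂ) (n : ℕ) : ℂ := ∑ f ∈ Mon F n, lam f

def SS (lam : F[X] → ℂ) (k : ℕ) : ℂ :=
  ∑ P ∈ (Irr F k).filter (fun P => P.natDegree ∣ k), (P.natDegree : ℂ) * lam P ^ (k / P.natDegree)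

theorem sum_dvd {lam : F[X] → ℂ} (h : IsMulFn lam) {P : F[X]} (hP : P.Monic) (n : ℕ) :
    ∑ f ∈ Mon F n, (if P ∣ f then lam f else 0) =
      if P.natDegree ≤ n then lam P * MS lam (n - P.natDegree) else 0 := by
  split_ifs with hle
  · rw [← Finset.sum_filter, MS, Finset.mul_sum]
    symm
    apply Finset.sum_bij (fun Q _ => P * Q)
    · intro Q hQ
      rw [mem_Mon] at hQ
      simp only [Finset.mem_filter, mem_Mon]
      refine ⟨⟨hP.mul hQ.1, ?_⟩, dvd_mul_right _ _⟩
      rw [hP.natDegree_mul hQ.1, hQ.2]; omega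
    · intro Q _ R _ h
      exact mul_left_cancel₀ hP.ne_zero h
    · intro f hf
      simp only [Finset.mem_filter, mem_Mon] at hf
      obtain ⟨⟨hm, hn⟩, Q, rfl⟩ := hf
      have hQ : Q.Monic := hP.of_mul_monic_left hm
      refine ⟨Q, ?_, rfl⟩
      rw [mem_Mon]
      refine ⟨hQ, ?_⟩
      rw [hP.natDegree_mul hQ] at hn; omega
    · intro Q hQ
      rw [mem_Mon] at hQ
      rw [h.mul _ _ hP hQ.1]
  · apply Finset.sum_eq_zero
    intro f hf
    rw [mem_Mon] at hf
    rw [if_neg]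
    intro hd
    have := natDegree_le_of_dvd hd hf.1.ne_zero
    omega

theorem newton {lam : F[X] → ℂ} (h : IsMulFn lam) (n : ℕ) :
    (n : ℂ) * MS lam n = ∑ k ∈ Finset.Icc 1 n, SS lam k * MS lam (n - k) := by
  have e1 : (n : ℂ) * MS lam n = ∑ f ∈ Mon F n, ∑ P ∈ Irr F n, ∑ j ∈ Finset.Icc 1 n,
      (P.natDegree : ℂ) * (if P ^ j ∣ f then lam f else 0) := by
    rw [MS, Finset.mul_sum]
    apply Finset.sum_congr rfl
    intro f hf
    have := key_count hf
    have h2 : (n : ℂ) = ∑ P ∈ Irr F n, ∑ j ∈ Finset.Icc 1 n,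
        ((if P ^ j ∣ f then P.natDegree else 0 : ℕ) : ℂ) := by
      exact_mod_cast this.symm
    rw [h2, Finset.sum_mul]
    apply Finset.sum_congr rfl
    intro P _
    rw [Finset.sum_mul]
    apply Finset.sum_congr rfl
    intro j _
    split_ifs <;> simp
  rw [e1, Finset.sum_comm]
  have e2 : ∀ P ∈ Irr F n, (∑ f ∈ Mon F n, ∑ j ∈ Finset.Icc 1 n,
      (P.natDegree : ℂ) * (if P ^ j ∣ f then lam f else 0)) =
      ∑ k ∈ Finset.Icc 1 n, if P.natDegree ∣ k then
        (P.natDegree : ℂ) * lam P ^ (k / P.natDegree) * MS lam (n - k) else 0 := by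
    intro P hP
    rw [mem_Irr] at hP
    obtain ⟨hPm, hPn, hPi⟩ := hP
    have hpos := hPi.natDegree_pos
    rw [Finset.sum_comm]
    have e3 : ∀ j ∈ Finset.Icc 1 n, (∑ f ∈ Mon F n,
        (P.natDegree : ℂ) * (if P ^ j ∣ f then lam f else 0)) =
        if j * P.natDegree ≤ n then (P.natDegree : ℂ) * lam P ^ j * MS lam (n - j * P.natDegree)
          else 0 := by
      intro j _
      rw [← Finset.mul_sum, sum_dvd h (hPm.pow j), natDegree_pow, h.pow hPm]
      split_ifs <;> ring
    rw [Finset.sum_congr rfl e3, ← Finset.sum_filter, ← Finset.sum_filter]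
    apply Finset.sum_bij (fun j _ => j * P.natDegree)
    · intro j hj
      simp only [Finset.mem_filter, Finset.mem_Icc] at hj ⊢
      exact ⟨⟨Nat.mul_pos (by omega) hpos, hj.2⟩, dvd_mul_left _ _⟩
    · intro a _ b _ hab
      exact Nat.eq_of_mul_eq_mul_right hpos hab
    · intro k hk
      simp only [Finset.mem_filter, Finset.mem_Icc] at hk
      obtain ⟨⟨h1, h2⟩, j, rfl⟩ := hk
      refine ⟨j, ?_, by ring⟩
      simp only [Finset.mem_filter, Finset.mem_Icc]
      refine ⟨⟨?_, ?_⟩, by linarith⟩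
      · rcases Nat.eq_zero_or_pos j with rfl | h
        · simp at h1
        · exact h
      · nlinarith
    · intro j _
      rw [Nat.mul_div_cancel _ hpos]
  rw [Finset.sum_congr rfl e2, Finset.sum_comm]
  apply Finset.sum_congr rfl
  intro k hk
  rw [Finset.mem_Icc] at hk
  rw [← Finset.sum_filter, SS, Finset.sum_mul]
  apply Finset.sum_congr _ (fun _ _ => rfl)
  ext P
  simp only [Finset.mem_filter, mem_Irr]
  constructor
  · rintro ⟨⟨a, b, c⟩, d⟩
    exact ⟨⟨a, Nat.le_of_dvd (by omega) d, c⟩, d⟩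
  · rintro ⟨⟨a, b, c⟩, d⟩
    exact ⟨⟨a, by omega, c⟩, d⟩

theorem MS_zero {lam : F[X] → ℂ} (h : IsMulFn lam) : MS lam 0 = 1 := by
  have : Mon F 0 = {1} := by
    ext f; simp only [mem_Mon, Finset.mem_singleton]
    constructor
    · rintro ⟨a, b⟩; exact eq_one_of_monic_natDegree_zero a b
    · rintro rfl; simp
  rw [MS, this]; simp [h.one]

theorem SS_eq {lam : F[X] → ℂ} (h : IsMulFn lam) (h2 : ∀ n, 2 ≤ n → MS lam n = 0) (n : ℕ) :
    SS lam (n + 1) = (-1) ^ n * MS lam 1 ^ (n + 1) := by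
  induction n with
  | zero =>
    have := newton h 1
    simp [MS_zero h] at this
    simp [this]
  | succ k ih =>
    have := newton h (k + 2)
    rw [h2 _ (by omega), mul_zero, Finset.sum_Icc_succ_top (by omega),
      Finset.sum_Icc_succ_top (by omega), Finset.sum_eq_zero] at this
    · rw [show k + 1 + 1 - (k + 1) = 1 by omega, Nat.sub_self, MS_zero h, ih] at this
      linear_combination -this
    · intro i hi
      rw [Finset.mem_Icc] at hi
      rw [h2 _ (by omega), mul_zero]

end HD

section HDB
variable {F : Type*} [Field F] [Fintype F]

def lam (χ : MulChar F ℂ) (ψ : AddChar F ℂ) (f : F[X]) : ℂ :=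
  χ ((-1) ^ f.natDegree * f.coeff 0) * ψ (-f.nextCoeff)

theorem lam_mul (χ : MulChar F ℂ) (ψ : AddChar F ℂ) : IsMulFn (lam χ ψ) := by
  constructor
  · simp [lam, nextCoeff]
  · intro f g hf hg
    unfold lam
    rw [hf.nextCoeff_mul hg, hf.natDegree_mul hg, mul_coeff_zero, neg_add, AddChar.map_add_eq_mul,
      pow_add, mul_mul_mul_comm, map_mul]
    ring

theorem Mon_shift {n : ℕ} {r : F[X]} (hr : r.degree < n) (G : F[X] → ℂ) :
    ∑ f ∈ Mon F n, G (f + r) = ∑ f ∈ Mon F n, G f := by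
  have key : ∀ r : F[X], r.degree < n → ∀ f ∈ Mon F n, f + r ∈ Mon F n := by
    intro r hr f hf
    rw [mem_Mon] at hf ⊢
    have hd : f.degree = n := by rw [degree_eq_natDegree hf.1.ne_zero, hf.2]
    have hlt : r.degree < f.degree := by rw [hd]; exact hr
    refine ⟨hf.1.add_of_left hlt, ?_⟩
    rw [natDegree_add_eq_left_of_degree_lt hlt, hf.2]
  apply Finset.sum_bij (fun f _ => f + r)
  · exact key r hr
  · intro a _ b _ h; exact add_right_cancel h
  · intro f hf
    refine ⟨f + (-r), key _ (by simpa using hr) f hf, by ring⟩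
  · intros; rfl

theorem MS_ge_two_of_add (χ : MulChar F ℂ) {ψ : AddChar F ℂ} (hψ : ψ ≠ 1) {n : ℕ} (hn : 2 ≤ n) :
    MS (lam χ ψ) n = 0 := by
  obtain ⟨b, hb⟩ := AddChar.ne_one_iff.1 hψ
  have hdeg : (C (-b) * X ^ (n - 1) : F[X]).degree < n :=
    lt_of_le_of_lt (degree_C_mul_X_pow_le _ _) (by exact_mod_cast (by omega : n - 1 < n))
  have h1 := Mon_shift hdeg (lam χ ψ)
  have h2 : ∑ f ∈ Mon F n, lam χ ψ (f + C (-b) * X ^ (n - 1)) = ψ b * MS (lam χ ψ) n := by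
    rw [MS, Finset.mul_sum]
    apply Finset.sum_congr rfl
    intro f hf
    rw [mem_Mon] at hf
    have hd : f.degree = n := by rw [degree_eq_natDegree hf.1.ne_zero, hf.2]
    have hnat : (f + C (-b) * X ^ (n - 1)).natDegree = n := by
      rw [natDegree_add_eq_left_of_degree_lt (by rw [hd]; exact hdeg), hf.2]
    have hc : (f + C (-b) * X ^ (n - 1)).coeff 0 = f.coeff 0 := by
      simp only [coeff_add, coeff_C_mul, coeff_X_pow]
      rw [if_neg (by omega)]; ring
    have hnc : (f + C (-b) * X ^ (n - 1)).nextCoeff = f.nextCoeff - b := by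
      rw [nextCoeff_of_natDegree_pos (by omega), nextCoeff_of_natDegree_pos (by omega), hnat, hf.2]
      simp [coeff_add, coeff_C_mul, coeff_X_pow]; ring
    unfold lam
    rw [hnat, hc, hnc, hf.2, neg_sub, sub_eq_add_neg, AddChar.map_add_eq_mul]
    ring
  rw [h2] at h1
  have h3 : (ψ b - 1) * MS (lam χ ψ) n = 0 := by
    rw [sub_mul, h1, MS]; ring
  rcases mul_eq_zero.1 h3 with h | h
  · exact absurd (sub_eq_zero.1 h) hb
  · exact h

theorem MS_ge_two_of_mul {χ : MulChar F ℂ} (hχ : χ ≠ 1) {n : ℕ} (hn : 2 ≤ n) :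
    MS (lam χ 1) n = 0 := by
  have h1 : ∀ b : F, ∑ f ∈ Mon F n, lam χ 1 (f + C b) = MS (lam χ 1) n := fun b =>
    Mon_shift (lt_of_le_of_lt degree_C_le (by exact_mod_cast (by omega : 0 < n))) _
  have h2 : ∑ b : F, ∑ f ∈ Mon F n, lam χ 1 (f + C b) = 0 := by
    rw [Finset.sum_comm]
    apply Finset.sum_eq_zero
    intro f hf
    rw [mem_Mon] at hf
    have : ∀ b : F, lam χ 1 (f + C b) = χ ((-1) ^ n) * χ (f.coeff 0 + b) := by
      intro b
      unfold lam
      rw [natDegree_add_C, hf.2]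
      simp
    simp_rw [this]
    have h5 : ∑ b : F, χ (f.coeff 0 + b) = ∑ b : F, χ b :=
      Fintype.sum_equiv (Equiv.addLeft (f.coeff 0)) _ _ (fun _ => rfl)
    rw [← Finset.mul_sum, h5, MulChar.sum_eq_zero_of_ne_one hχ, mul_zero]
  simp_rw [h1] at h2
  rw [Finset.sum_const, nsmul_eq_mul] at h2
  rcases mul_eq_zero.1 h2 with h | h
  · simp at h
  · exact h

theorem MS_one (χ : MulChar F ℂ) (ψ : AddChar F ℂ) : MS (lam χ ψ) 1 = gaussSum χ ψ := by
  unfold MS gaussSum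
  symm
  apply Finset.sum_bij (fun a _ => X - C a)
  · intro a _; rw [mem_Mon]; exact ⟨monic_X_sub_C a, natDegree_X_sub_C a⟩
  · intro a _ b _ h; simpa using h
  · intro f hf
    rw [mem_Mon] at hf
    refine ⟨-f.coeff 0, Finset.mem_univ _, ?_⟩
    conv_rhs => rw [hf.1.eq_X_add_C hf.2]
    simp
  · intro a _
    simp [lam, nextCoeff_X_sub_C]

theorem SS_lam {χ : MulChar F ℂ} {ψ : AddChar F ℂ} (h : χ ≠ 1 ∨ ψ ≠ 1) {t : ℕ} (ht : 0 < t) :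
    SS (lam χ ψ) t = (-1) ^ (t - 1) * gaussSum χ ψ ^ t := by
  obtain ⟨n, rfl⟩ : ∃ n, t = n + 1 := ⟨t - 1, by omega⟩
  rw [SS_eq (lam_mul χ ψ), MS_one]; · rfl
  intro n hn
  by_cases hψ : ψ = 1
  · subst hψ
    exact MS_ge_two_of_mul (by simpa using h) hn
  · exact MS_ge_two_of_add χ hψ hn

variable {K : Type*} [Field K] [Fintype K] [Algebra F K]

def EE (F K : Type*) [Field F] [Fintype F] [Field K] [Fintype K] (t : ℕ) : Finset K :=
  Finset.univ.filter (fun x => x ^ (Fintype.card F) ^ t = x)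

def nu (F : Type*) {K : Type*} [Field F] [Field K] [Algebra F K] (t : ℕ) (x : K) : F :=
  ((-1) ^ (minpoly F x).natDegree * (minpoly F x).coeff 0) ^ (t / (minpoly F x).natDegree)

def tau (F : Type*) {K : Type*} [Field F] [Field K] [Algebra F K] (t : ℕ) (x : K) : F :=
  ((t / (minpoly F x).natDegree : ℕ) : F) * (-(minpoly F x).nextCoeff)

theorem mem_EE_iff {t : ℕ} {x : K} : x ∈ EE F K t ↔ (minpoly F x).natDegree ∣ t := by
  have hi : IsIntegral F x := IsIntegral.of_finite F x
  rw [(minpoly.irreducible hi).natDegree_dvd_iff_dvd_X_pow_card_pow_sub_X, minpoly.dvd_iff]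
  simp [EE, sub_eq_zero]

theorem splits_aux {P : F[X]} {m t : ℕ} (hK : Fintype.card K = Fintype.card F ^ m) (htm : t ∣ m)
    (hP : P ∣ X ^ (Fintype.card F) ^ t - X) :
    (P.map (algebraMap F K)).Splits := by
  have h1 : P ∣ X ^ (Fintype.card F) ^ m - X := hP.trans (dvd_pow_pow_sub_self_of_dvd htm)
  have h2 := Polynomial.map_dvd (algebraMap F K) h1
  have h3 : (X ^ Fintype.card K - X : K[X]).Splits := by
    rw [splits_iff_card_roots, FiniteField.roots_X_pow_card_sub_X,
      FiniteField.X_pow_card_sub_X_natDegree_eq K Fintype.one_lt_card]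
    rfl
  rw [← hK] at h2
  refine Splits.of_dvd h3 (FiniteField.X_pow_card_sub_X_ne_zero K Fintype.one_lt_card) ?_
  simpa using h2

theorem card_EE {m t : ℕ} (hK : Fintype.card K = Fintype.card F ^ m) (htm : t ∣ m) (ht : 0 < t) :
    (EE F K t).card = Fintype.card F ^ t := by
  obtain ⟨p, hp⟩ := CharP.exists F
  have hsep : (X ^ (Fintype.card F) ^ t - X : F[X]).Separable := by
    apply galois_poly_separable p
    apply dvd_pow _ ht.ne'
    rw [← CharP.cast_eq_zero_iff F p]
    exact FiniteField.cast_card_eq_zero F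
  have h1 := card_rootSet_eq_natDegree (K := K) hsep (splits_aux hK htm dvd_rfl)
  rw [FiniteField.X_pow_card_pow_sub_X_natDegree_eq F ht.ne' Fintype.one_lt_card] at h1
  rw [← h1, ← Set.toFinset_card]
  congr 1
  ext x
  rw [Set.mem_toFinset, mem_rootSet]
  simp [EE, sub_eq_zero, FiniteField.X_pow_card_pow_sub_X_ne_zero F ht.ne' Fintype.one_lt_card]

theorem sum_EE {m t : ℕ} (hK : Fintype.card K = Fintype.card F ^ m) (htm : t ∣ m) (ht : 0 < t)
    (χ : MulChar F ℂ) (ψ : AddChar F ℂ) :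
    ∑ x ∈ EE F K t, χ (nu F t x) * ψ (tau F t x) = SS (lam χ ψ) t := by
  have hint : ∀ x : K, IsIntegral F x := fun x => IsIntegral.of_finite F x
  have hmap : ∀ x ∈ EE F K t, minpoly F x ∈ (Irr F t).filter (fun P => P.natDegree ∣ t) := by
    intro x hx
    rw [mem_EE_iff] at hx
    simp only [Finset.mem_filter, mem_Irr]
    exact ⟨⟨minpoly.monic (hint x), Nat.le_of_dvd ht hx, minpoly.irreducible (hint x)⟩, hx⟩
  rw [← Finset.sum_fiberwise_of_maps_to hmap, SS]
  apply Finset.sum_congr rfl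
  intro P hP
  simp only [Finset.mem_filter, mem_Irr] at hP
  obtain ⟨⟨hPm, hPt, hPi⟩, hPd⟩ := hP
  have hval : ∀ x ∈ (EE F K t).filter (fun x => minpoly F x = P),
      χ (nu F t x) * ψ (tau F t x) = lam χ ψ P ^ (t / P.natDegree) := by
    intro x hx
    rw [Finset.mem_filter] at hx
    unfold nu tau lam
    rw [hx.2, map_pow, mul_pow, ← AddChar.map_nsmul_eq_pow, nsmul_eq_mul]
  rw [Finset.sum_congr rfl hval, Finset.sum_const, nsmul_eq_mul]
  congr 2
  have h1 := card_rootSet_eq_natDegree (K := K) (PerfectField.separable_of_irreducible hPi)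
    (splits_aux hK htm (by
      have := hPi.natDegree_dvd_iff_dvd_X_pow_card_pow_sub_X.1 hPd
      rwa [Nat.card_eq_fintype_card] at this))
  rw [← h1, ← Set.toFinset_card]
  congr 1
  ext x
  rw [Set.mem_toFinset, mem_rootSet, Finset.mem_filter, mem_EE_iff]
  constructor
  · rintro ⟨_, rfl⟩; exact ⟨hPi.ne_zero, minpoly.aeval F x⟩
  · rintro ⟨_, h⟩
    have := minpoly.eq_of_irreducible_of_monic hPi h hPm
    exact ⟨this ▸ hPd, this.symm⟩

theorem trace_norm_eq {m t : ℕ} (hK : Fintype.card K = Fintype.card F ^ m) (htm : t ∣ m) (ht : 0 < t)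
    {x : K} (hx : x ∈ EE F K t) :
    Algebra.trace F K x = ((m / t : ℕ) : F) * tau F t x ∧
    Algebra.norm F x = nu F t x ^ (m / t) := by
  have hi : IsIntegral F x := IsIntegral.of_finite F x
  rw [mem_EE_iff] at hx
  have hfr : Module.finrank F K = m := by
    rw [Module.card_eq_pow_finrank (K := F)] at hK
    exact Nat.pow_right_injective Fintype.one_lt_card hK
  have hpos : 0 < (minpoly F x).natDegree := minpoly.natDegree_pos hi
  have htower := Module.finrank_mul_finrank F (IntermediateField.adjoin F {x}) K
  rw [IntermediateField.adjoin.finrank hi, hfr] at htower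
  have hq : Module.finrank (IntermediateField.adjoin F {x}) K =
      (m / t) * (t / (minpoly F x).natDegree) := by
    obtain ⟨a, rfl⟩ := htm
    obtain ⟨b, rfl⟩ := hx
    rw [Nat.mul_div_cancel_left _ ht, Nat.mul_div_cancel_left _ hpos]
    apply Nat.eq_of_mul_eq_mul_left hpos
    rw [htower]; ring
  constructor
  · rw [trace_eq_finrank_mul_minpoly_nextCoeff, hq, tau]; push_cast; ring
  · rw [Algebra.norm_eq_norm_adjoin, hq, nu, ← pow_mul, mul_comm (m / t)]
    congr 1
    have := Algebra.PowerBasis.norm_gen_eq_coeff_zero_minpoly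
      (IntermediateField.adjoin.powerBasis hi)
    rw [IntermediateField.adjoin.powerBasis_gen, IntermediateField.adjoin.powerBasis_dim,
      IntermediateField.minpoly_gen] at this
    exact this

def AA (F K : Type*) [Field F] [Fintype F] [Field K] [Fintype K] [Algebra F K]
    (t : ℕ) (χ : MulChar F ℂ) : ℂ :=
  ∑ x ∈ EE F K t, if tau F t x = 0 then χ (nu F t x) else 0

theorem AA_aux {m t : ℕ} (hK : Fintype.card K = Fintype.card F ^ m) (htm : t ∣ m) (ht : 0 < t)
    (χ : MulChar F ℂ) {ψ : AddChar F ℂ} (hψ : ψ.IsPrimitive) :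
    (Fintype.card F : ℂ) * AA F K t χ = ∑ x ∈ EE F K t, χ (nu F t x) +
      (-1) ^ (t - 1) * gaussSum χ ψ ^ t * (if χ ^ t = 1 then (Fintype.card F : ℂ) - 1 else 0) := by
  have h1 : (Fintype.card F : ℂ) * AA F K t χ =
      ∑ c : F, ∑ x ∈ EE F K t, χ (nu F t x) * ψ.mulShift c (tau F t x) := by
    rw [Finset.sum_comm, AA, Finset.mul_sum]
    apply Finset.sum_congr rfl
    intro x _
    simp_rw [AddChar.mulShift_apply]
    rw [← Finset.mul_sum, AddChar.sum_mulShift _ hψ]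
    split_ifs <;> simp [mul_comm]
  rw [h1, ← Finset.add_sum_erase _ _ (Finset.mem_univ (0 : F))]
  congr 1
  · simp
  have h2 : ∀ c ∈ Finset.univ.erase (0 : F),
      ∑ x ∈ EE F K t, χ (nu F t x) * ψ.mulShift c (tau F t x) =
      (-1) ^ (t - 1) * gaussSum χ ψ ^ t * (χ ^ t)⁻¹ c := by
    intro c hc
    have hc0 : c ≠ 0 := Finset.ne_of_mem_erase hc
    have hg := gaussSum_mulShift χ ψ (Units.mk0 c hc0)
    rw [Units.val_mk0] at hg
    rw [sum_EE hK htm ht, SS_lam (Or.inr (hψ hc0)) ht, ← hg, mul_pow, MulChar.inv_apply',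
      MulChar.pow_apply' _ ht.ne']
    have : χ c * χ c⁻¹ = 1 := by rw [← map_mul, mul_inv_cancel₀ hc0, map_one]
    have h3 : χ c ^ t * χ c⁻¹ ^ t = 1 := by rw [← mul_pow, this, one_pow]
    linear_combination (-(-1) ^ (t - 1) * gaussSum χ (ψ.mulShift c) ^ t) * h3
  rw [Finset.sum_congr rfl h2, ← Finset.mul_sum]
  congr 1
  have h3 : ∑ c ∈ Finset.univ.erase (0 : F), (χ ^ t)⁻¹ c = ∑ c, (χ ^ t)⁻¹ c := by
    rw [← Finset.add_sum_erase _ _ (Finset.mem_univ (0 : F)),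
      MulChar.map_zero, zero_add]
  split_ifs with h
  · rw [h, inv_one, Finset.sum_congr rfl (g := fun _ => (1 : ℂ))]
    · rw [Finset.sum_const, Finset.card_erase_of_mem (Finset.mem_univ _), Finset.card_univ,
        nsmul_eq_mul, Nat.cast_sub Fintype.card_pos]
      simp
    · intro c hc
      exact MulChar.one_apply (Ne.isUnit (Finset.ne_of_mem_erase hc))
  · rw [h3, MulChar.sum_eq_zero_of_ne_one (by simpa using h)]

theorem AA_ne {m t : ℕ} (hK : Fintype.card K = Fintype.card F ^ m) (htm : t ∣ m) (ht : 0 < t)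
    {χ : MulChar F ℂ} (hχ : χ ≠ 1) {ψ : AddChar F ℂ} (hψ : ψ.IsPrimitive) :
    (Fintype.card F : ℂ) * AA F K t χ =
      (-1) ^ (t - 1) * gaussSum χ ψ ^ t * (if χ ^ t = 1 then (Fintype.card F : ℂ) - 1 else 0) := by
  rw [AA_aux hK htm ht χ hψ]
  have h := sum_EE (K := K) hK htm ht χ 1
  rw [SS_lam (Or.inl hχ) ht, gaussSum_one_right hχ, zero_pow ht.ne', mul_zero] at h
  simp only [AddChar.one_apply, mul_one] at h
  rw [h, zero_add]

theorem AA_one {m t : ℕ} (hK : Fintype.card K = Fintype.card F ^ m) (htm : t ∣ m) (ht : 0 < t)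
     {ψ : AddChar F ℂ} (hψ : ψ.IsPrimitive) :
    AA F K t 1 = (Fintype.card F : ℂ) ^ (t - 1) - 1 := by
  have h := AA_aux (K := K) hK htm ht 1 hψ
  have hψ1 : ψ ≠ 1 := by
    have := hψ one_ne_zero
    simpa using this
  rw [gaussSum_one_left hψ1, one_pow, if_pos rfl] at h
  have hB : ∑ x ∈ EE F K t, (1 : MulChar F ℂ) (nu F t x) = (Fintype.card F : ℂ) ^ t - 1 := by
    have h0 : (0 : K) ∈ EE F K t := by
      simp [EE, ht.ne']
    rw [← Finset.add_sum_erase _ _ h0, Finset.sum_congr rfl (g := fun _ => (1 : ℂ))]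
    · rw [Finset.sum_const, Finset.card_erase_of_mem h0, card_EE hK htm ht, nsmul_eq_mul,
        Nat.cast_sub (Nat.one_le_pow _ _ Fintype.card_pos)]
      simp [nu, ht.ne', minpoly.zero, MulChar.map_zero]
    · intro x hx
      have hx0 := Finset.ne_of_mem_erase hx
      apply MulChar.one_apply
      apply Ne.isUnit
      unfold nu
      apply pow_ne_zero
      apply mul_ne_zero (pow_ne_zero _ (by simp))
      rw [Ne, minpoly.coeff_zero_eq_zero (IsIntegral.of_finite F x)]
      exact hx0
  rw [hB] at h
  have hq : (Fintype.card F : ℂ) ≠ 0 := by exact_mod_cast Fintype.card_ne_zero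
  apply mul_left_cancel₀ hq
  rw [h]
  obtain ⟨n, rfl⟩ : ∃ n, t = n + 1 := ⟨t - 1, by omega⟩
  have : ((-1 : ℂ)) ^ n * (-1) ^ n = 1 := by rw [← mul_pow]; simp
  simp only [Nat.add_sub_cancel]
  linear_combination (-(Fintype.card F : ℂ) + 1) * this

end HDB

section JC

theorem sum_eval_zero {p : ℕ} [Fact p.Prime] (Q : (ZMod p)[X]) (h : Q.natDegree < p - 1) :
    ∑ x : ZMod p, Q.eval x = 0 := by
  simp_rw [eval_eq_sum_range]
  rw [Finset.sum_comm]
  apply Finset.sum_eq_zero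
  intro i hi
  rw [Finset.mem_range] at hi
  rw [← Finset.mul_sum, FiniteField.sum_pow_lt_card_sub_one, mul_zero]
  rw [ZMod.card]; omega

theorem unique_gauss {p : ℕ} (hp : p.Prime) {a b α β : ℤ} {γ : ZMod p}
    (h1 : a ^ 2 + b ^ 2 = p) (h2 : α ^ 2 + β ^ 2 = p)
    (h3 : (b : ZMod p) = a * γ) (h4 : (β : ZMod p) = α * γ)
    (hb : Even b) (hβ : Even β) (hp2 : Odd (p : ℤ)) :
    (α = a ∧ β = b) ∨ (α = -a ∧ β = -b) := by
  have hp0 : (0 : ℤ) < p := by exact_mod_cast hp.pos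
  have ha : Odd a := by
    rw [← h1] at hp2
    by_contra h
    rw [Int.not_odd_iff_even] at h
    rw [← Int.not_even_iff_odd] at hp2
    exact hp2 ((h.pow_of_ne_zero (by norm_num)).add (hb.pow_of_ne_zero (by norm_num)))
  have hα : Odd α := by
    rw [← h2] at hp2
    by_contra h
    rw [Int.not_odd_iff_even] at h
    rw [← Int.not_even_iff_odd] at hp2
    exact hp2 ((h.pow_of_ne_zero (by norm_num)).add (hβ.pow_of_ne_zero (by norm_num)))
  have hdvd : (p : ℤ) ∣ α * b - β * a := by
    rw [← ZMod.intCast_zmod_eq_zero_iff_dvd]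
    push_cast
    rw [h3, h4]; ring
  obtain ⟨c, hc⟩ := hdvd
  have hid : (α * b - β * a) ^ 2 + (α * a + β * b) ^ 2 = (p : ℤ) ^ 2 := by
    have : (α * b - β * a) ^ 2 + (α * a + β * b) ^ 2 = (α ^ 2 + β ^ 2) * (a ^ 2 + b ^ 2) := by ring
    rw [this, h1, h2]; ring
  have hodd : Odd (α * a + β * b) := (hα.mul ha).add_even (hβ.mul_right b)
  have hne : α * a + β * b ≠ 0 := by
    intro h; rw [h] at hodd; simp at hodd
  have hc0 : c = 0 := by
    rw [hc] at hid
    have hpos : 0 < (α * a + β * b) ^ 2 := by positivity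
    have : c ^ 2 < 1 := by
      by_contra hcon
      push Not at hcon
      nlinarith [mul_pow (p : ℤ) c 2, mul_le_mul_of_nonneg_left hcon (sq_nonneg (p : ℤ))]
    have : c ^ 2 = 0 := by nlinarith [sq_nonneg c]
    simpa using this
  rw [hc0, mul_zero] at hc
  rw [hc] at hid
  have h5 : (α * a + β * b - p) * (α * a + β * b + p) = 0 := by linear_combination hid
  rcases mul_eq_zero.1 h5 with h | h
  · left
    constructor
    · apply mul_left_cancel₀ hp0.ne'
      linear_combination (-α) * h1 + a * h + b * hc
    · apply mul_left_cancel₀ hp0.ne'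
      linear_combination (-β) * h1 + b * h - a * hc
  · right
    constructor
    · apply mul_left_cancel₀ hp0.ne'
      linear_combination (-α) * h1 + a * h + b * hc
    · apply mul_left_cancel₀ hp0.ne'
      linear_combination (-β) * h1 + b * h - a * hc

theorem gen_sq {p f : ℕ} [hpp : Fact p.Prime] (hp : p = 4 * f + 1)
    (g : (ZMod p)ˣ) (hg : ∀ u : (ZMod p)ˣ, u ∈ Subgroup.zpowers g) :
    (g : ZMod p) ^ f * (g : ZMod p) ^ f = -1 := by
  have hf : 0 < f := by
    rcases Nat.eq_zero_or_pos f with rfl | h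
    · exact absurd hpp.out (by rw [hp]; decide)
    · exact h
  have ho : orderOf g = 4 * f := by
    rw [orderOf_eq_card_of_forall_mem_zpowers hg, Nat.card_eq_fintype_card, ZMod.card_units]; omega
  have h1 : ((g : ZMod p) ^ f * (g : ZMod p) ^ f) * ((g : ZMod p) ^ f * (g : ZMod p) ^ f) = 1 := by
    have := pow_orderOf_eq_one g
    rw [ho] at this
    have h2 := congrArg (Units.val) this
    push_cast at h2
    rw [← h2]; ring
  rcases mul_self_eq_one_iff.1 h1 with h | h
  · exfalso
    have h3 : g ^ (2 * f) = 1 := by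
      ext; push_cast; rw [← h]; ring
    have := Nat.le_of_dvd (by omega) (orderOf_dvd_of_pow_eq_one h3)
    omega
  · exact h

theorem exists_gchar {p f : ℕ} [hpp : Fact p.Prime] (hp : p = 4 * f + 1)
    (g : (ZMod p)ˣ) (hg : ∀ u : (ZMod p)ˣ, u ∈ Subgroup.zpowers g) :
    ∃ χ : MulChar (ZMod p) GaussianInt, χ (g : ZMod p) = ⟨0, 1⟩ := by
  let ζ : GaussianIntˣ := ⟨⟨0, 1⟩, ⟨0, -1⟩, by decide, by decide⟩
  have h4 : ζ ^ 4 = 1 := by ext <;> decide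
  have hζ : ζ ∈ rootsOfUnity (Fintype.card (ZMod p)ˣ) GaussianInt := by
    rw [_root_.mem_rootsOfUnity, ZMod.card_units, hp, Nat.add_sub_cancel, pow_mul, h4, one_pow]
  exact ⟨MulChar.ofRootOfUnity hζ hg, MulChar.ofRootOfUnity_spec hζ hg⟩

theorem jac_even {p f : ℕ} [hpp : Fact p.Prime] (hp : p = 4 * f + 1)
    (g : (ZMod p)ˣ) (hg : ∀ u : (ZMod p)ˣ, u ∈ Subgroup.zpowers g)
    (χ : MulChar (ZMod p) GaussianInt) (hχ : χ (g : ZMod p) = ⟨0, 1⟩) :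
    Even (jacobiSum χ χ).im := by
  have h4 : χ ^ 4 = 1 := by
    rw [MulChar.eq_iff hg]
    rw [MulChar.pow_apply_coe, hχ, MulChar.one_apply_coe]; decide
  rw [← ZMod.intCast_eq_zero_iff_even]
  let φ : GaussianInt →+ ZMod 2 := 
    { toFun := fun z => ((z.im : ℤ) : ZMod 2), map_zero' := by simp, map_add' := by intros; simp }
  change φ (jacobiSum χ χ) = 0
  unfold jacobiSum
  rw [map_sum]
  apply Finset.sum_involution (fun x _ => 1 - x)
  · intro x _
    rw [sub_sub_cancel, mul_comm (χ (1 - x))]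
    exact CharTwo.add_self_eq_zero _
  · intro x _ hx heq
    apply hx
    rw [heq]
    have hsq : (χ x * χ x) * (χ x * χ x) = 1 ∨ χ x = 0 := by
      by_cases hx0 : x = 0
      · right; rw [hx0, MulChar.map_zero]
      · left
        have := congrArg (fun c : MulChar (ZMod p) GaussianInt => c x) h4
        simp only [MulChar.pow_apply' _ (by norm_num : (4 : ℕ) ≠ 0),
          MulChar.one_apply (Ne.isUnit hx0)] at this
        rw [← this]; ring
    rcases hsq with h | h
    · rcases mul_self_eq_one_iff.1 h with h | h <;> rw [h] <;> simp [φ]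
    · rw [h]; simp
  · intro x _; exact sub_sub_cancel 1 x
  · intro x _; exact Finset.mem_univ _

theorem jac_mod {p f : ℕ} [hpp : Fact p.Prime] (hp : p = 4 * f + 1)
    (g : (ZMod p)ˣ) (hg : ∀ u : (ZMod p)ˣ, u ∈ Subgroup.zpowers g)
    (χ : MulChar (ZMod p) GaussianInt) (hχ : χ (g : ZMod p) = ⟨0, 1⟩) :
    ((jacobiSum χ χ).im : ZMod p) = (jacobiSum χ χ).re * (g : ZMod p) ^ f := by
  have hf : 0 < f := by
    rcases Nat.eq_zero_or_pos f with rfl | h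
    · exact absurd hpp.out (by rw [hp]; decide)
    · exact h
  have hsq := gen_sq hp g hg
  let φ : GaussianInt →+* ZMod p := Zsqrtd.lift ⟨(g : ZMod p) ^ f, by rw [hsq]; simp⟩
  have hφ : ∀ z : GaussianInt, φ z = z.re + z.im * (g : ZMod p) ^ f := fun z => rfl
  have hval : ∀ x : ZMod p, φ (χ x) = x ^ f := by
    intro x
    by_cases hx : x = 0
    · rw [hx, MulChar.map_zero, map_zero, zero_pow hf.ne']
    · obtain ⟨k, hk⟩ : ∃ k : ℕ, g ^ k = Units.mk0 x hx :=
        (mem_powers_iff_mem_zpowers.2 (hg (Units.mk0 x hx)))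
      have : x = (g : ZMod p) ^ k := by
        rw [← Units.val_pow_eq_pow_val, hk, Units.val_mk0]
      rw [this, map_pow, hχ, map_pow, hφ]
      simp; ring
  have hz : φ (jacobiSum χ χ) = 0 := by
    unfold jacobiSum
    rw [map_sum]
    have := sum_eval_zero (p := p) (X ^ f * (1 - X) ^ f) (by
      have h1 : (X ^ f * (1 - X) ^ f : (ZMod p)[X]).natDegree ≤ f + f * 1 := by
        refine natDegree_mul_le.trans (add_le_add (natDegree_X_pow_le f) ?_)
        refine natDegree_pow_le.trans (Nat.mul_le_mul_left f ?_)
        refine (natDegree_sub_le _ _).trans ?_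
        simp
      omega)
    rw [← this]
    apply Finset.sum_congr rfl
    intro x _
    rw [map_mul, hval, hval]; simp
  rw [hφ] at hz
  linear_combination (-(g : ZMod p) ^ f) * hz + ((jacobiSum χ χ).im : ZMod p) * hsq

theorem jac_final {p f : ℕ} [hpp : Fact p.Prime] (hp : p = 4 * f + 1)
    (g : (ZMod p)ˣ) (hg : ∀ u : (ZMod p)ˣ, u ∈ Subgroup.zpowers g)
    (χ4 : MulChar (ZMod p) ℂ) (hχ4g : χ4 (g : ZMod p) = Complex.I) (hχ1 : χ4 ≠ 1) (hχ2 : χ4 * χ4 ≠ 1)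
    (a4 b4 : ℤ) (hab : a4 ^ 2 + b4 ^ 2 = (p : ℤ))
    (ha4 : a4 ≡ -legendreSym p 2 [ZMOD 4])
    (hb4 : (b4 : ZMod p) = (a4 : ZMod p) * (g : ZMod p) ^ ((p - 1) / 4))
    (π4 : ℂ) (hπ4 : π4 = (-1 : ℂ) ^ f * ((a4 : ℂ) + Complex.I * (b4 : ℂ))) :
    jacobiSum χ4 χ4 ^ 2 = π4 ^ 2 ∧
      jacobiSum χ4⁻¹ χ4⁻¹ = (starRingEnd ℂ) (jacobiSum χ4 χ4) := by
  obtain ⟨χ, hχ⟩ := exists_gchar hp g hg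
  have hcomp : χ.ringHomComp GaussianInt.toComplex = χ4 := by
    rw [MulChar.eq_iff hg, MulChar.ringHomComp_apply, hχ, hχ4g]
    simp [GaussianInt.toComplex_def]
  have hJ : jacobiSum χ4 χ4 = GaussianInt.toComplex (jacobiSum χ χ) := by
    rw [← hcomp, jacobiSum_ringHomComp]
  have hconj : χ4.ringHomComp (starRingEnd ℂ) = χ4⁻¹ := by
    rw [MulChar.eq_iff hg, MulChar.ringHomComp_apply, MulChar.inv_apply_eq_inv', hχ4g]
    simp
  have hJc : jacobiSum χ4⁻¹ χ4⁻¹ = (starRingEnd ℂ) (jacobiSum χ4 χ4) := by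
    rw [← hconj, jacobiSum_ringHomComp]
  refine ⟨?_, hJc⟩
  have hnorm : (jacobiSum χ χ).re ^ 2 + (jacobiSum χ χ).im ^ 2 = (p : ℤ) := by
    have h := jacobiSum_mul_jacobiSum_inv (F := ZMod p) (F' := ℂ)
      (by rw [ringChar.eq ℂ 0, ZMod.ringChar_zmod_n]; exact hpp.out.ne_zero.symm) hχ1 hχ1 hχ2
    rw [hJc, hJ, GaussianInt.toComplex_def, ZMod.card] at h
    have h2 := congrArg Complex.re h
    simp at h2
    have h3 : (((jacobiSum χ χ).re ^ 2 + (jacobiSum χ χ).im ^ 2 : ℤ) : ℝ) = ((p : ℤ) : ℝ) := by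
      push_cast; rw [← h2]; simp; ring
    exact_mod_cast h3
  have hodd : Odd (p : ℤ) := by rw [hp]; push_cast; exact ⟨2 * f, by ring⟩
  have hbe : Even b4 := by
    have hp2 : p ≠ 2 := by omega
    have hls : legendreSym p 2 = 1 ∨ legendreSym p 2 = -1 := by
      apply legendreSym.eq_one_or_neg_one
      intro h
      have : ((2 : ℕ) : ZMod p) = 0 := by exact_mod_cast h
      rw [ZMod.natCast_eq_zero_iff] at this
      have := Nat.le_of_dvd (by norm_num) this
      have := hpp.out.two_le
      omega
    have hao : Odd a4 := by
      rw [Int.odd_iff]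
      unfold Int.ModEq at ha4
      rcases hls with h | h <;> rw [h] at ha4 <;> omega
    by_contra h
    rw [Int.not_even_iff_odd] at h
    have : Even (p : ℤ) := by rw [← hab]; exact hao.pow.add_odd h.pow
    exact (Int.not_even_iff_odd.2 hodd) this
  have hm := jac_mod hp g hg χ hχ
  have hf4 : (p - 1) / 4 = f := by omega
  rw [hf4] at hb4
  have hsign : ((-1 : ℂ) ^ f) ^ 2 = 1 := by rw [← pow_mul, mul_comm, pow_mul]; simp
  have hu := unique_gauss hpp.out hab hnorm hb4 hm hbe (jac_even hp g hg χ hχ) hodd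
  rw [hπ4, mul_pow, hsign, hJ, GaussianInt.toComplex_def]
  rcases hu with ⟨h1, h2⟩ | ⟨h1, h2⟩ <;> rw [h1, h2] <;> push_cast <;> ring

theorem quad_facts {p f : ℕ} [hpp : Fact p.Prime] (hp : p = 4 * f + 1)
    (χ4 : MulChar (ZMod p) ℂ) (hχ4o : orderOf χ4 = 4) {ψ : AddChar (ZMod p) ℂ} (hψ : ψ.IsPrimitive) :
    gaussSum (χ4 ^ 2) ψ ^ 2 = p ∧ gaussSum χ4 ψ ^ 4 = p * jacobiSum χ4 χ4 ^ 2 ∧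
    gaussSum χ4⁻¹ ψ ^ 4 = p * jacobiSum χ4⁻¹ χ4⁻¹ ^ 2 := by
  have h4 : χ4 ^ 4 = 1 := by rw [← hχ4o]; exact pow_orderOf_eq_one _
  have h2 : χ4 ^ 2 ≠ 1 := by
    intro h; have := orderOf_dvd_of_pow_eq_one h; rw [hχ4o] at this; omega
  have hinv2 : (χ4⁻¹) ^ 2 = χ4 ^ 2 := by
    rw [inv_pow, inv_eq_iff_mul_eq_one, ← pow_add, h4]
  have hsq : (χ4 ^ 2) ^ 2 = 1 := by rw [← pow_mul, h4]
  have hq : (χ4 ^ 2).IsQuadratic := by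
    intro a
    by_cases ha : a = 0
    · left; rw [ha, MulChar.map_zero]
    · right
      have := congrArg (fun c : MulChar (ZMod p) ℂ => c a) hsq
      simp only [MulChar.pow_apply' _ (by norm_num : (2 : ℕ) ≠ 0),
          MulChar.one_apply (Ne.isUnit ha)] at this
      rw [MulChar.pow_apply' _ (by norm_num : (2 : ℕ) ≠ 0)]
      exact mul_self_eq_one_iff.1 (by rw [← this]; ring)
  have hG : gaussSum (χ4 ^ 2) ψ ^ 2 = p := by
    rw [gaussSum_sq h2 hq hψ, ZMod.card, MulChar.pow_apply' _ (by norm_num : (2 : ℕ) ≠ 0),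
      ← map_pow]
    simp
  refine ⟨hG, ?_, ?_⟩
  · have := jacobiSum_mul_nontrivial (χ := χ4) (φ := χ4) (by rwa [← sq]) ψ
    rw [← sq] at this
    rw [← hG, ← mul_pow, this]; ring
  · have := jacobiSum_mul_nontrivial (χ := χ4⁻¹) (φ := χ4⁻¹) (by rwa [← sq, hinv2]) ψ
    rw [← sq, hinv2] at this
    rw [← hG, ← mul_pow, this]; ring

end JC
section FinalPart

theorem I_pow_inj {n h : ℕ} (e : Complex.I ^ n = Complex.I ^ h) : n % 4 = h % 4 := by
  rw [Complex.I_pow_eq_pow_mod n, Complex.I_pow_eq_pow_mod h] at e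
  have h1 : n % 4 < 4 := Nat.mod_lt _ (by norm_num)
  have h2 : h % 4 < 4 := Nat.mod_lt _ (by norm_num)
  generalize n % 4 = a at *
  generalize h % 4 = b at *
  interval_cases a <;> interval_cases b <;> first
    | rfl
    | (exfalso
       have hr := congrArg Complex.re e
       have hi := congrArg Complex.im e
       simp [pow_succ] at hr hi <;> (try norm_num at hr) <;> (try norm_num at hi))

theorem indicator_eq {p f : ℕ} [hpp : Fact p.Prime] (hp : p = 4 * f + 1)
    (g : (ZMod p)ˣ) (hg : ∀ u : (ZMod p)ˣ, u ∈ Subgroup.zpowers g)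
    (χ4 : MulChar (ZMod p) ℂ) (hχ4g : χ4 (g : ZMod p) = Complex.I) (h : ℕ) (z : ZMod p) :
    (if ∃ k : ℕ, z = (g : ZMod p) ^ (h + 4 * k) then (1 : ℂ) else 0) =
      (1 / 4) * ∑ j ∈ Finset.range 4, (-Complex.I) ^ (h * j) * (χ4 ^ j) z := by
  have hf : 0 < f := by
    rcases Nat.eq_zero_or_pos f with rfl | h
    · exact absurd hpp.out (by rw [hp]; decide)
    · exact h
  by_cases hz : z = 0
  · subst hz
    rw [if_neg]
    · simp [MulChar.map_zero]
    · rintro ⟨k, hk⟩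
      exact (pow_ne_zero _ g.ne_zero) hk.symm
  · obtain ⟨n, hn⟩ : ∃ k : ℕ, g ^ k = Units.mk0 z hz :=
        (mem_powers_iff_mem_zpowers.2 (hg (Units.mk0 z hz)))
    have hzn : z = (g : ZMod p) ^ n := by
      rw [← Units.val_pow_eq_pow_val, hn, Units.val_mk0]
    have hval : ∀ j, (χ4 ^ j) z = (Complex.I ^ n) ^ j := by
      intro j
      rw [hzn, ← Units.val_pow_eq_pow_val, MulChar.pow_apply_coe, Units.val_pow_eq_pow_val, map_pow,
        hχ4g]
    set w : ℂ := (-Complex.I) ^ h * Complex.I ^ n with hw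
    have hsum : ∑ j ∈ Finset.range 4, (-Complex.I) ^ (h * j) * (χ4 ^ j) z =
        1 + w + w ^ 2 + w ^ 3 := by
      simp_rw [hval, pow_mul, ← mul_pow, ← hw]
      simp [Finset.sum_range_succ]
    rw [hsum]
    have hII : (-Complex.I) ^ h * Complex.I ^ h = 1 := by rw [← mul_pow]; simp
    have hiff : (∃ k : ℕ, z = (g : ZMod p) ^ (h + 4 * k)) ↔ w = 1 := by
      constructor
      · rintro ⟨k, hk⟩
        have h1 := congrArg χ4 hk
        rw [hzn, map_pow, map_pow, hχ4g, pow_add, pow_mul, Complex.I_pow_four, one_pow, mul_one] at h1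
        rw [hw, h1, hII]
      · intro h1
        have h2 : Complex.I ^ n = Complex.I ^ h := by
          calc Complex.I ^ n = Complex.I ^ n * ((-Complex.I) ^ h * Complex.I ^ h) := by rw [hII, mul_one]
            _ = w * Complex.I ^ h := by rw [hw]; ring
            _ = _ := by rw [h1, one_mul]
        have h3 := I_pow_inj h2
        have hle : h ≤ n + 4 * (f * h) := by nlinarith
        refine ⟨(n + 4 * (f * h) - h) / 4, ?_⟩
        have h4 : h + 4 * ((n + 4 * (f * h) - h) / 4) = n + 4 * (f * h) := by omega
        have hone : (g : ZMod p) ^ (4 * f) = 1 := by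
          have := ZMod.pow_card_sub_one_eq_one g.ne_zero
          rwa [show p - 1 = 4 * f by omega] at this
        rw [h4, hzn, pow_add, ← mul_assoc, pow_mul, hone, one_pow, mul_one]
    by_cases hc : w = 1
    · rw [if_pos (hiff.2 hc), hc]; norm_num
    · rw [if_neg (fun h => hc (hiff.1 h))]
      have h4 : w ^ 4 = 1 := by
        rw [hw, mul_pow, ← pow_mul, ← pow_mul, mul_comm h, mul_comm n, pow_mul, pow_mul]
        simp [Complex.I_pow_four, Even.neg_pow (by decide : Even 4)]
      have h5 : (w - 1) * (1 + w + w ^ 2 + w ^ 3) = 0 := by linear_combination h4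
      rcases mul_eq_zero.1 h5 with h | h
      · exact absurd (sub_eq_zero.1 h) hc
      · rw [h, mul_zero]

theorem NN_eq {p f m t : ℕ} [hpp : Fact p.Prime] (hp : p = 4 * f + 1)
    (hm : 2 ≤ m) (ht : t ∣ m) (ht0 : 0 < t)
    (K : Type*) [Field K] [Fintype K] [Algebra (ZMod p) K]
    (hK : Fintype.card K = p ^ m)
    (g : (ZMod p)ˣ) (hg : ∀ u : (ZMod p)ˣ, u ∈ Subgroup.zpowers g)
    (χ4 : MulChar (ZMod p) ℂ) (hχ4g : χ4 (g : ZMod p) = Complex.I) (h : ℕ)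
    (hpmt : ¬ p ∣ m / t) :
    (NN (ZMod p) K (g : ZMod p) 4 h t 0 : ℂ) =
      (1 / 4) * (AA (ZMod p) K t 1 + (-Complex.I) ^ h * AA (ZMod p) K t (χ4 ^ (m / t))
        + (-Complex.I) ^ (h * 2) * AA (ZMod p) K t (χ4 ^ (2 * (m / t)))
        + (-Complex.I) ^ (h * 3) * AA (ZMod p) K t (χ4 ^ (3 * (m / t)))) := by
  have hK' : Fintype.card K = Fintype.card (ZMod p) ^ m := by rw [ZMod.card, hK]
  have hM0 : m / t ≠ 0 := by
    intro h0; rw [h0] at hpmt; exact hpmt (dvd_zero p)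
  have hMp : ((m / t : ℕ) : ZMod p) ≠ 0 := by
    rwa [Ne, ZMod.natCast_eq_zero_iff]
  have h1 : NN (ZMod p) K (g : ZMod p) 4 h t 0 = ((EE (ZMod p) K t).filter (fun x =>
      tau (ZMod p) t x = 0 ∧ ∃ k : ℕ, nu (ZMod p) t x ^ (m / t) = (g : ZMod p) ^ (h + 4 * k))).card := by
    unfold NN
    rw [Nat.card_eq_fintype_card, Fintype.card_subtype]
    congr 1
    ext x
    simp only [Finset.mem_filter, Finset.mem_univ, true_and]
    constructor
    · rintro ⟨a, b, c⟩
      have hx : x ∈ EE (ZMod p) K t := by simpa [EE] using a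
      obtain ⟨e1, e2⟩ := trace_norm_eq hK' ht ht0 hx
      rw [e1] at b
      rw [e2] at c
      exact ⟨hx, (mul_eq_zero.1 b).resolve_left hMp, c⟩
    · rintro ⟨hx, b, c⟩
      obtain ⟨e1, e2⟩ := trace_norm_eq hK' ht ht0 hx
      refine ⟨by simpa [EE] using hx, by rw [e1, b, mul_zero], by rwa [e2]⟩
  have h2 : (NN (ZMod p) K (g : ZMod p) 4 h t 0 : ℂ) =
      ∑ j ∈ Finset.range 4, (1 / 4) * ((-Complex.I) ^ (h * j) * AA (ZMod p) K t (χ4 ^ (j * (m / t)))) := by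
    rw [h1, Finset.card_filter]
    push_cast
    simp_rw [AA, Finset.mul_sum]
    rw [Finset.sum_comm]
    apply Finset.sum_congr rfl
    intro x _
    by_cases ht : tau (ZMod p) t x = 0
    · have := indicator_eq hp g hg χ4 hχ4g h (nu (ZMod p) t x ^ (m / t))
      simp only [ht, true_and, if_true]
      rw [this, Finset.mul_sum]
      apply Finset.sum_congr rfl
      intro j _
      rw [map_pow, pow_mul χ4, MulChar.pow_apply' _ hM0]
    · simp [ht]
  rw [h2]
  simp [Finset.sum_range_succ]
  ring

theorem AA2 {p f m t : ℕ} [hpp : Fact p.Prime] (hp : p = 4 * f + 1) (ht : t ∣ m) (ht0 : 0 < t)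
    (K : Type*) [Field K] [Fintype K] [Algebra (ZMod p) K] (hK : Fintype.card K = p ^ m)
    (χ4 : MulChar (ZMod p) ℂ) (hχ4o : orderOf χ4 = 4) :
    AA (ZMod p) K t (χ4 ^ 2) =
      if 2 ∣ t then -((p : ℂ) ^ ((t - 2) / 2) * ((p : ℂ) - 1)) else 0 := by
  have hK' : Fintype.card K = Fintype.card (ZMod p) ^ m := by rw [ZMod.card, hK]
  have h2 : χ4 ^ 2 ≠ 1 := by
    intro h; have := orderOf_dvd_of_pow_eq_one h; rw [hχ4o] at this; omega
  have hψ : (ZMod.stdAddChar (N := p)).IsPrimitive := ZMod.isPrimitive_stdAddChar p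
  have hA := AA_ne (K := K) hK' ht ht0 h2 hψ
  have hp0 : (p : ℂ) ≠ 0 := by exact_mod_cast hpp.out.ne_zero
  have hif : (χ4 ^ 2) ^ t = 1 ↔ 2 ∣ t := by
    rw [← pow_mul, ← orderOf_dvd_iff_pow_eq_one, hχ4o]; omega
  rw [ZMod.card] at hA
  simp only [hif] at hA
  apply mul_left_cancel₀ hp0
  rw [hA]
  split_ifs with h
  · obtain ⟨u, rfl⟩ := h
    obtain ⟨v, rfl⟩ : ∃ v, u = v + 1 := ⟨u - 1, by omega⟩
    rw [pow_mul, (quad_facts hp χ4 hχ4o hψ).1, show (2 * (v + 1) - 2) / 2 = v by omega,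
      show 2 * (v + 1) - 1 = 2 * v + 1 by omega, pow_succ (-1 : ℂ), pow_mul]
    simp; ring
  · simp

theorem AA1 {p f m t : ℕ} [hpp : Fact p.Prime] (hp : p = 4 * f + 1) (ht : t ∣ m) (ht0 : 0 < t)
    (K : Type*) [Field K] [Fintype K] [Algebra (ZMod p) K] (hK : Fintype.card K = p ^ m)
    (χ : MulChar (ZMod p) ℂ) (hχ4o : orderOf χ = 4) {z : ℂ} (hz : jacobiSum χ χ ^ 2 = z ^ 2) :
    AA (ZMod p) K t χ =
      if 4 ∣ t then -((p : ℂ) ^ ((t - 4) / 4) * z ^ (t / 2) * ((p : ℂ) - 1)) else 0 := by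
  have hK' : Fintype.card K = Fintype.card (ZMod p) ^ m := by rw [ZMod.card, hK]
  have h2 : χ ≠ 1 := by
    intro h; rw [h, orderOf_one] at hχ4o; omega
  have hψ : (ZMod.stdAddChar (N := p)).IsPrimitive := ZMod.isPrimitive_stdAddChar p
  have hA := AA_ne (K := K) hK' ht ht0 h2 hψ
  have hp0 : (p : ℂ) ≠ 0 := by exact_mod_cast hpp.out.ne_zero
  have hif : χ ^ t = 1 ↔ 4 ∣ t := by
    rw [← orderOf_dvd_iff_pow_eq_one, hχ4o]
  rw [ZMod.card] at hA
  simp only [hif] at hA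
  apply mul_left_cancel₀ hp0
  rw [hA]
  split_ifs with h
  · obtain ⟨u, rfl⟩ := h
    obtain ⟨v, rfl⟩ : ∃ v, u = v + 1 := ⟨u - 1, by omega⟩
    rw [pow_mul, (quad_facts hp χ hχ4o hψ).2.1, hz, show (4 * (v + 1) - 4) / 4 = v by omega,
      show 4 * (v + 1) - 1 = 2 * (2 * v + 1) + 1 by omega, pow_succ (-1 : ℂ), pow_mul,
      show 4 * (v + 1) / 2 = 2 * (v + 1) by omega, pow_mul z]
    simp; ring
  · simp

end FinalPart

/-- The values of `N_t` for `s = 4`, `q = p ≡ 1 (mod 4)` and `a = 0`, assuming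
`p ∤ m/t` and `d ∣ h`, in terms of `π_4 = (−1)^f·(a_4 + i·b_4)`. -/
theorem stmt11 (p m h t d l i0 f : ℕ) [Fact p.Prime] (hm : 2 ≤ m)
    (ht : t ∣ m) (ht0 : 0 < t)
    (K : Type*) [Field K] [Fintype K] [Algebra (ZMod p) K]
    (hK : Fintype.card K = p ^ m)
    (hp : p = 4 * f + 1)
    (g : (ZMod p)ˣ) (hg : ∀ u : (ZMod p)ˣ, u ∈ Subgroup.zpowers g)
    (hh : h < 4)
    (χ4 : MulChar (ZMod p) ℂ) (hχ4o : orderOf χ4 = 4) (hχ4g : χ4 (g : ZMod p) = Complex.I)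
    (a4 b4 : ℤ) (hab : a4 ^ 2 + b4 ^ 2 = (p : ℤ))
    (ha4 : a4 ≡ -legendreSym p 2 [ZMOD 4])
    (hb4 : (b4 : ZMod p) = (a4 : ZMod p) * (g : ZMod p) ^ ((p - 1) / 4))
    (π4 : ℂ) (hπ4 : π4 = (-1 : ℂ) ^ f * ((a4 : ℂ) + Complex.I * (b4 : ℂ)))
    (hd : d = Nat.gcd (m / t) 4) (hl : l = Nat.gcd t (4 / d))
    (hpmt : ¬ p ∣ m / t) (hdh : d ∣ h)
    (hi0 : i0 < 4 / d ∧ (m / (d * t)) * i0 ≡ h / d [MOD 4 / d]) :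
    (d = 1 ∧ l = 1 →
      (NN (ZMod p) K (g : ZMod p) 4 h t 0 : ℂ) = ((p : ℂ) ^ (t - 1) - 1) / 4) ∧
    (d = 1 ∧ l = 2 →
      (NN (ZMod p) K (g : ZMod p) 4 h t 0 : ℂ) =
        (1 / 4) * ((p : ℂ) ^ (t - 1) - 1 -
          (-1 : ℂ) ^ i0 * (p : ℂ) ^ ((t - 2) / 2) * ((p : ℂ) - 1))) ∧
    (d = 1 ∧ l = 4 →
      (NN (ZMod p) K (g : ZMod p) 4 h t 0 : ℂ) =
        (1 / 4) * ((p : ℂ) ^ (t - 1) - 1 -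
          (-1 : ℂ) ^ i0 * (p : ℂ) ^ ((t - 4) / 4) * ((p : ℂ) - 1) *
            ((p : ℂ) ^ (t / 4) + 2 * ((π4 ^ (t / 2) * Complex.I ^ i0).re : ℂ)))) ∧
    (d = 2 ∧ l = 1 →
      (NN (ZMod p) K (g : ZMod p) 4 h t 0 : ℂ) = ((p : ℂ) ^ (t - 1) - 1) / 2) ∧
    (d = 2 ∧ l = 2 →
      (NN (ZMod p) K (g : ZMod p) 4 h t 0 : ℂ) =
        (1 / 2) * ((p : ℂ) ^ (t - 1) - 1 -
          (-1 : ℂ) ^ i0 * (p : ℂ) ^ ((t - 2) / 2) * ((p : ℂ) - 1))) ∧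
    (d = 4 ∧ l = 1 →
      (NN (ZMod p) K (g : ZMod p) 4 h t 0 : ℂ) = (p : ℂ) ^ (t - 1) - 1) := by
  have hpp : Fact p.Prime := inferInstance
  have hK' : Fintype.card K = Fintype.card (ZMod p) ^ m := by rw [ZMod.card, hK]
  have h4 : χ4 ^ 4 = 1 := by rw [← hχ4o]; exact pow_orderOf_eq_one _
  have hχ1 : χ4 ≠ 1 := by
    intro h; rw [h, orderOf_one] at hχ4o; omega
  have hχ2 : χ4 * χ4 ≠ 1 := by
    rw [← sq]
    intro h; have := orderOf_dvd_of_pow_eq_one h; rw [hχ4o] at this; omega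
  obtain ⟨hJ, hJc⟩ := jac_final hp g hg χ4 hχ4g hχ1 hχ2 a4 b4 hab ha4 hb4 π4 hπ4
  have hJ' : jacobiSum χ4⁻¹ χ4⁻¹ ^ 2 = (starRingEnd ℂ π4) ^ 2 := by
    rw [hJc, ← map_pow, hJ, map_pow]
  have hinv : χ4 ^ 3 = χ4⁻¹ := by
    rw [eq_inv_iff_mul_eq_one, ← pow_succ, h4]
  have hN := NN_eq hp hm ht ht0 K hK g hg χ4 hχ4g h hpmt
  have hA0 : AA (ZMod p) K t 1 = (p : ℂ) ^ (t - 1) - 1 := by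
    have := AA_one (K := K) hK' ht ht0 (ZMod.isPrimitive_stdAddChar p)
    rwa [ZMod.card] at this
  have hA1 := AA1 hp ht ht0 K hK χ4 hχ4o hJ
  have hA3 := AA1 hp ht ht0 K hK χ4⁻¹ (by rw [orderOf_inv, hχ4o]) hJ'
  have hA2 := AA2 hp ht ht0 K hK χ4 hχ4o
  have hred : ∀ n, χ4 ^ n = χ4 ^ (n % 4) := by
    intro n; rw [← hχ4o, pow_mod_orderOf]
  have hdiv : m / (d * t) = m / t / d := by rw [mul_comm, Nat.div_div_eq_div_mul]
  rw [hdiv] at hi0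
  obtain ⟨hi, hmod⟩ := hi0
  have hneg1 : (-1 : ℂ) = Complex.I ^ 2 := by simp
  have hnegI : (-Complex.I : ℂ) = Complex.I ^ 3 := by simp [pow_succ]
  rw [hred (m / t), hred (2 * (m / t)), hred (3 * (m / t))] at hN
  -- the three shapes
  have hN1 : d = 1 → (NN (ZMod p) K (g : ZMod p) 4 h t 0 : ℂ) = (1 / 4) * (AA (ZMod p) K t 1 +
      (-Complex.I) ^ i0 * AA (ZMod p) K t χ4 + (-1) ^ i0 * AA (ZMod p) K t (χ4 ^ 2) +
      Complex.I ^ i0 * AA (ZMod p) K t χ4⁻¹) := by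
    intro hd1
    rw [hd1] at hd hmod hi
    rw [hN]
    have hodd : m / t % 2 = 1 := by
      by_contra hcon
      have : 2 ∣ Nat.gcd (m / t) 4 := Nat.dvd_gcd (by omega) (by norm_num)
      rw [← hd] at this; omega
    simp only [Nat.div_one] at hmod hi
    have hm4 : m / t % 4 = 1 ∨ m / t % 4 = 3 := by omega
    have hmod2 : (m / t % 4) * i0 % 4 = h % 4 := by
      rw [Nat.mod_mul_mod]; exact hmod
    rcases hm4 with e | e
    · have e2 : 2 * (m / t) % 4 = 2 := by omega
      have e3 : 3 * (m / t) % 4 = 3 := by omega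
      have : h = i0 := by rw [e] at hmod2; omega
      rw [e, e2, e3, this, hinv, pow_one]
      have s1 : (-Complex.I) ^ (i0 * 2) = (-1) ^ i0 := by rw [mul_comm, pow_mul]; simp
      have s2 : (-Complex.I) ^ (i0 * 3) = Complex.I ^ i0 := by
        rw [mul_comm, pow_mul]; simp [pow_succ]
      rw [s1, s2]
    · have e2 : 2 * (m / t) % 4 = 2 := by omega
      have e3 : 3 * (m / t) % 4 = 1 := by omega
      rw [e] at hmod2
      rw [e, e2, e3, hinv, pow_one]
      have s0 : (-Complex.I) ^ h = Complex.I ^ i0 := by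
        rw [hnegI, ← pow_mul, Complex.I_pow_eq_pow_mod, Complex.I_pow_eq_pow_mod i0]
        congr 1; omega
      have s1 : (-Complex.I) ^ (h * 2) = (-1) ^ i0 := by
        rw [pow_mul, s0, ← pow_mul, mul_comm, pow_mul]; simp
      have s2 : (-Complex.I) ^ (h * 3) = (-Complex.I) ^ i0 := by
        rw [pow_mul, s0, ← pow_mul, mul_comm, pow_mul, ← hnegI]
      rw [s0, s1, s2]; ring
  have hN2 : d = 2 → (NN (ZMod p) K (g : ZMod p) 4 h t 0 : ℂ) = (1 / 2) * (AA (ZMod p) K t 1 +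
      (-1) ^ i0 * AA (ZMod p) K t (χ4 ^ 2)) := by
    intro hd2
    rw [hd2] at hd hmod hi hdh
    rw [hN]
    have he : 2 ∣ m / t := by rw [hd]; exact Nat.gcd_dvd_left _ _
    have hne : ¬ 4 ∣ m / t := by
      intro hcon
      have : 4 ∣ Nat.gcd (m / t) 4 := Nat.dvd_gcd hcon dvd_rfl
      rw [← hd] at this; omega
    have e : m / t % 4 = 2 := by omega
    have e2 : 2 * (m / t) % 4 = 0 := by omega
    have e3 : 3 * (m / t) % 4 = 2 := by omega
    have hmod2 : (m / t / 2 % 2) * i0 % 2 = h / 2 % 2 := by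
      rw [Nat.mod_mul_mod]; exact hmod
    rw [show m / t / 2 % 2 = 1 by omega] at hmod2
    rw [e, e2, e3, pow_zero]
    have s0 : (-Complex.I) ^ h = (-1) ^ i0 := by
      rw [hnegI, hneg1, ← pow_mul, ← pow_mul, Complex.I_pow_eq_pow_mod,
        Complex.I_pow_eq_pow_mod (2 * i0)]
      congr 1; omega
    have s1 : (-Complex.I) ^ (h * 2) = 1 := by
      rw [pow_mul, s0, ← pow_mul, mul_comm, pow_mul]; simp
    have s2 : (-Complex.I) ^ (h * 3) = (-1) ^ i0 := by
      rw [pow_mul, s0, ← pow_mul, mul_comm, pow_mul]; norm_num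
    rw [s0, s1, s2]; ring
  have hN4 : d = 4 → (NN (ZMod p) K (g : ZMod p) 4 h t 0 : ℂ) = AA (ZMod p) K t 1 := by
    intro hd4
    rw [hd4] at hd hdh
    rw [hN]
    have he : 4 ∣ m / t := by rw [hd]; exact Nat.gcd_dvd_left _ _
    have e : m / t % 4 = 0 := by omega
    have e2 : 2 * (m / t) % 4 = 0 := by omega
    have e3 : 3 * (m / t) % 4 = 0 := by omega
    have : h = 0 := by omega
    rw [e, e2, e3, this]; simp; ring
  refine ⟨?_, ?_, ?_, ?_, ?_, ?_⟩
  · rintro ⟨hd1, hl1⟩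
    rw [hl1, hd1, Nat.div_one] at hl
    have ht2 : ¬ 2 ∣ t := by
      intro hcon
      have : 2 ∣ Nat.gcd t 4 := Nat.dvd_gcd hcon (by norm_num)
      rw [← hl] at this; omega
    rw [hN1 hd1, hA0, hA1, hA2, hA3, if_neg ht2, if_neg (by omega), if_neg (by omega)]
    ring
  · rintro ⟨hd1, hl1⟩
    rw [hl1, hd1, Nat.div_one] at hl
    have ht2 : 2 ∣ t := by rw [hl]; exact Nat.gcd_dvd_left _ _
    have ht4 : ¬ 4 ∣ t := by
      intro hcon
      have : 4 ∣ Nat.gcd t 4 := Nat.dvd_gcd hcon dvd_rfl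
      rw [← hl] at this; omega
    rw [hN1 hd1, hA0, hA1, hA2, hA3, if_pos ht2, if_neg ht4, if_neg ht4]
    ring
  · rintro ⟨hd1, hl1⟩
    rw [hl1, hd1, Nat.div_one] at hl
    have ht4 : 4 ∣ t := by rw [hl]; exact Nat.gcd_dvd_left _ _
    rw [hN1 hd1, hA0, hA1, hA2, hA3, if_pos ht4, if_pos ht4, if_pos (show 2 ∣ t by omega)]
    obtain ⟨u, rfl⟩ := ht4
    obtain ⟨v, rfl⟩ : ∃ v, u = v + 1 := ⟨u - 1, by omega⟩
    have hre := Complex.add_conj (π4 ^ (4 * (v + 1) / 2) * Complex.I ^ i0)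
    rw [map_mul, map_pow, map_pow, Complex.conj_I] at hre
    push_cast at hre
    rw [← hre, show (4 * (v + 1) - 2) / 2 = v + (v + 1) by omega,
      show (4 * (v + 1) - 4) / 4 = v by omega, show 4 * (v + 1) / 4 = v + 1 by omega, pow_add]
    have s1 : (-Complex.I) ^ i0 = (-1) ^ i0 * Complex.I ^ i0 := by rw [← mul_pow]; simp
    have s2 : ((-1 : ℂ) ^ i0) * (-1) ^ i0 = 1 := by rw [← mul_pow]; simp
    rw [s1]
    linear_combination (-(1 / 4) * (-(p : ℂ) ^ v * ((p : ℂ) - 1)) *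
      (starRingEnd ℂ π4) ^ (4 * (v + 1) / 2) * Complex.I ^ i0) * s2
  · rintro ⟨hd1, hl1⟩
    rw [hl1, hd1] at hl
    have ht2 : ¬ 2 ∣ t := by
      intro hcon
      have : 2 ∣ Nat.gcd t (4 / 2) := Nat.dvd_gcd hcon (by norm_num)
      rw [← hl] at this; omega
    rw [hN2 hd1, hA0, hA2, if_neg ht2]
    ring
  · rintro ⟨hd1, hl1⟩
    rw [hl1, hd1] at hl
    have ht2 : 2 ∣ t := by
      have := Nat.gcd_dvd_left t (4 / 2)
      rwa [← hl] at this
    rw [hN2 hd1, hA0, hA2, if_pos ht2]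
    ring
  · rintro ⟨hd1, hl1⟩
    rw [hN4 hd1, hA0]

end
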